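/- Assume that either H_i ≠ {0} for all i ∈ Ω or P is hierarchical. Then for every φ ∈ G there exists a unique λ ∈ Aut(P) such that λ restricted to Ω − K is the identity and ⟨supp(φ(α))⟩_P = λ[⟨supp(α)⟩_P] for all α ∈ H; moreover, such λ necessarily belongs to T. -/

import Mathlib

def idl {Ω : Type*} [PartialOrder Ω] (B : Set Ω) : Set Ω := {a | ∃ b ∈ B, a ≤ b}

def IsIdl {Ω : Type*} [PartialOrder Ω] (I : Set Ω) : Prop := ∀ a b : Ω, a ≤ b → b ∈ I → a ∈ I

noncomputable def lenP {Ω : Type*} [PartialOrder Ω] (y : Ω) : ℕ :=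
  sSup {n : ℕ | ∃ c : Finset Ω, IsChain (· ≤ ·) (c : Set Ω) ∧ y ∈ c ∧ (∀ x ∈ c, x ≤ y) ∧ c.card = n}

def Hierarchical (Ω : Type*) [PartialOrder Ω] : Prop :=
  ∀ u v : Ω, lenP u + 1 ≤ lenP v → u ≤ v

def hsupp {Ω : Type*} {H : Ω → Type*} [∀ i, Zero (H i)] (β : ∀ i, H i) : Set Ω :=
  {i | β i ≠ 0}

/-- `K` is the set of indices with nonzero component module. -/
def Kset {Ω : Type*} (H : Ω → Type*) [∀ i, Zero (H i)] : Set Ω := {i | ∃ x : H i, x ≠ 0}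

/-- The subgroup `T` of order automorphisms of the poset. -/
def Tpred (S : Type*) [Ring S] {Ω : Type*} [PartialOrder Ω] (H : Ω → Type*)
    [∀ i, AddCommGroup (H i)] [∀ i, Module S (H i)] {Y : Type*} (ϖ : Set Ω → Y)
    (μ : Ω ≃o Ω) : Prop :=
  (∀ i ∉ Kset H, μ i = i) ∧ (∀ I : Set Ω, I ⊆ Kset H → ϖ (μ '' I) = ϖ I) ∧
    ∀ i : Ω, Nonempty (H i ≃ₗ[S] H (μ i))

/-- The group `G` of `S`-module automorphisms of `H` preserving `ϖ ∘ supp`. -/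
def Gpred (S : Type*) [Ring S] {Ω : Type*} (H : Ω → Type*)
    [∀ i, AddCommGroup (H i)] [∀ i, Module S (H i)] {Y : Type*} (ϖ : Set Ω → Y)
    (φ : (∀ i, H i) ≃ₗ[S] (∀ i, H i)) : Prop :=
  ∀ α : ∀ i, H i, ϖ (hsupp (φ α)) = ϖ (hsupp α)

theorem isIdl_idl {Ω : Type*} [PartialOrder Ω] (B : Set Ω) : IsIdl (idl B) := by
  rintro a b hab ⟨c, hc, hbc⟩
  exact ⟨c, hc, hab.trans hbc⟩

theorem mem_idl_of_mem {Ω : Type*} [PartialOrder Ω] {B : Set Ω} {a : Ω} (h : a ∈ B) :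
    a ∈ idl B := ⟨a, h, le_rfl⟩

theorem mem_idl_single {Ω : Type*} [PartialOrder Ω] {a b : Ω} : a ∈ idl {b} ↔ a ≤ b := by
  simp [idl]

theorem idl_single_subset {Ω : Type*} [PartialOrder Ω] {J : Set Ω} (hJ : IsIdl J) {a : Ω}
    (h : a ∈ J) : idl {a} ⊆ J := by
  intro x hx
  exact hJ _ _ (mem_idl_single.1 hx) h

theorem mem_of_idl_eq {Ω : Type*} [PartialOrder Ω] {B : Set Ω} {a : Ω} (h : idl B = idl {a}) :
    a ∈ B := by
  have : a ∈ idl B := by rw [h]; exact mem_idl_single.2 le_rfl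
  obtain ⟨b, hb, hab⟩ := this
  have h2 : b ≤ a := mem_idl_single.1 (h ▸ mem_idl_of_mem hb)
  exact (le_antisymm hab h2) ▸ hb

theorem lenP_lt {Ω : Type*} [Fintype Ω] [PartialOrder Ω] {a b : Ω} (h : a < b) :
    lenP a < lenP b := by
  classical
  have bdd : ∀ y : Ω, BddAbove {n : ℕ | ∃ c : Finset Ω, IsChain (· ≤ ·) (c : Set Ω) ∧ y ∈ c ∧
      (∀ x ∈ c, x ≤ y) ∧ c.card = n} := by
    intro y
    refine ⟨Fintype.card Ω, ?_⟩
    rintro n ⟨c, -, -, -, rfl⟩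
    exact Finset.card_le_univ c
  have hm := Nat.sSup_mem (s := {n : ℕ | ∃ c : Finset Ω, IsChain (· ≤ ·) (c : Set Ω) ∧ a ∈ c ∧
      (∀ x ∈ c, x ≤ a) ∧ c.card = n}) ⟨1, {a}, by simp, by simp, by simp, by simp⟩ (bdd a)
  obtain ⟨c, hc, hac, hle, hcard⟩ := hm
  have hb : b ∉ c := fun hb => absurd (hle b hb) (not_le_of_gt h)
  have : lenP a + 1 ≤ lenP b := by
    refine le_csSup (bdd b) ⟨insert b c, ?_, by simp, ?_, ?_⟩
    · rw [Finset.coe_insert]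
      exact hc.insert (fun x hx _ => Or.inr ((hle x hx).trans h.le))
    · intro x hx
      rcases Finset.mem_insert.1 hx with rfl | hx
      · exact le_rfl
      · exact (hle x hx).trans h.le
    · rw [Finset.card_insert_of_notMem hb, hcard]; rfl
  omega

open Classical in
/-- Existence of a leading position. -/
def RR {Ω : Type*} [PartialOrder Ω] {S : Type*} [Ring S] {H : Ω → Type*}
    [∀ i, AddCommGroup (H i)] [∀ i, Module S (H i)]
    (φ : (∀ i, H i) ≃ₗ[S] (∀ i, H i)) (u j : Ω) : Prop :=
  ∃ α : H u, α ≠ 0 ∧ idl (hsupp (φ (Pi.single u α))) = idl {j}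

open Classical in
theorem hsupp_single {Ω : Type*} {H : Ω → Type*} [∀ i, AddCommGroup (H i)] {u : Ω} {α : H u}
    (h : α ≠ 0) : hsupp (Pi.single u α : ∀ i, H i) = {u} := by
  ext i
  simp only [hsupp, Set.mem_setOf_eq, Set.mem_singleton_iff]
  constructor
  · intro hi
    by_contra hne
    exact hi (Pi.single_eq_of_ne hne _)
  · rintro rfl
    simpa using h

theorem Gsymm {S : Type*} [Ring S] {Ω : Type*} {H : Ω → Type*}
    [∀ i, AddCommGroup (H i)] [∀ i, Module S (H i)] {Y : Type*} {ϖ : Set Ω → Y}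
    {φ : (∀ i, H i) ≃ₗ[S] (∀ i, H i)} (h : Gpred S H ϖ φ) : Gpred S H ϖ φ.symm := by
  intro α
  have := h (φ.symm α)
  simpa using this.symm

theorem inc {Ω : Type*} [PartialOrder Ω] {Y : Type*} {ϖ : Set Ω → Y}
    (h31 : ∀ B : Set Ω, ϖ B = ϖ (idl B))
    (h33 : ∀ I : Set Ω, IsIdl I → ∀ u ∈ I, ϖ I = ϖ {u} → I = idl {u}) {a b : Ω}
    (h : ϖ {a} = ϖ {b}) (hab : a ≤ b) : a = b := by
  have := h33 (idl {b}) (isIdl_idl _) a (mem_idl_single.2 hab) (by rw [← h31, h])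
  exact le_antisymm hab (mem_idl_single.1 (this ▸ mem_idl_single.2 le_rfl))

open Classical in
theorem RW {Ω : Type*} [PartialOrder Ω] {S : Type*} [Ring S] {H : Ω → Type*}
    [∀ i, AddCommGroup (H i)] [∀ i, Module S (H i)] {Y : Type*} {ϖ : Set Ω → Y}
    (h31 : ∀ B : Set Ω, ϖ B = ϖ (idl B))
    {φ : (∀ i, H i) ≃ₗ[S] (∀ i, H i)} (hφ : Gpred S H ϖ φ) {u j : Ω} (h : RR φ u j) :
    ϖ {j} = ϖ {u} := by
  obtain ⟨α, h0, h⟩ := h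
  rw [h31 {j}, ← h, ← h31, hφ, hsupp_single h0]

open Classical in
theorem exists_of_sum {Ω : Type*} [Fintype Ω] {S : Type*} [Ring S] {H : Ω → Type*}
    [∀ i, AddCommGroup (H i)] [∀ i, Module S (H i)]
    (φ : (∀ i, H i) ≃ₗ[S] (∀ i, H i)) (γ : ∀ i, H i) {u : Ω} (h : u ∈ hsupp (φ γ)) :
    ∃ j, γ j ≠ 0 ∧ u ∈ hsupp (φ (Pi.single j (γ j))) := by
  have h1 : φ γ = ∑ j, φ (Pi.single j (γ j)) := by
    rw [← map_sum, Finset.univ_sum_single]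
  have h2 : (∑ j, φ (Pi.single j (γ j)) u) ≠ 0 := by
    rw [← Finset.sum_apply, ← h1]; exact h
  obtain ⟨j, -, hj⟩ := Finset.exists_ne_zero_of_sum_ne_zero h2
  refine ⟨j, ?_, hj⟩
  intro h0
  rw [h0] at hj
  simp at hj

open Classical in
theorem key {Ω : Type*} [Fintype Ω] [PartialOrder Ω]
    {S : Type*} [Ring S] {H : Ω → Type*} [∀ i, AddCommGroup (H i)] [∀ i, Module S (H i)]
    {Y : Type*} {r : Y → Y → Prop} (hr : ∀ a b : Y, r a b → r b a → a = b)
    {ϖ : Set Ω → Y}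
    (h31 : ∀ B : Set Ω, ϖ B = ϖ (idl B))
    (h32 : ∀ I J : Set Ω, IsIdl I → IsIdl J → I ⊆ J → r (ϖ I) (ϖ J))
    (h33 : ∀ I : Set Ω, IsIdl I → ∀ u ∈ I, ϖ I = ϖ {u} → I = idl {u})
    {φ : (∀ i, H i) ≃ₗ[S] (∀ i, H i)} (hφ : Gpred S H ϖ φ) {u : Ω} {α : H u} (h0 : α ≠ 0) :
    ∃ j, idl (hsupp (φ (Pi.single u α))) = idl {j} ∧ RR φ.symm j u := by
  have hu : u ∈ hsupp (φ.symm (φ (Pi.single u α))) := by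
    rw [LinearEquiv.symm_apply_apply, hsupp_single h0]; rfl
  obtain ⟨j, hj0, hj⟩ := exists_of_sum φ.symm _ hu
  have hI : ϖ (idl (hsupp (φ.symm (Pi.single j (φ (Pi.single u α) j))))) = ϖ {j} := by
    rw [← h31, Gsymm hφ, hsupp_single hj0]
  have hJ : ϖ (idl (hsupp (φ (Pi.single u α)))) = ϖ {u} := by
    rw [← h31, hφ, hsupp_single h0]
  have a1 := h32 _ _ (isIdl_idl {u}) (isIdl_idl _)
    (idl_single_subset (isIdl_idl _) (mem_idl_of_mem hj))
  have hj1 : j ∈ hsupp (φ (Pi.single u α)) := hj0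
  have a2 := h32 _ _ (isIdl_idl {j}) (isIdl_idl _)
    (idl_single_subset (isIdl_idl _) (mem_idl_of_mem hj1))
  rw [hI, ← h31] at a1
  rw [hJ, ← h31] at a2
  have e := hr _ _ a1 a2
  refine ⟨j, h33 _ (isIdl_idl _) j (mem_idl_of_mem hj1) (hJ.trans e), _, hj0, ?_⟩
  exact h33 _ (isIdl_idl _) u (mem_idl_of_mem hj) (hI.trans e.symm)

open Classical in
theorem RR_uniq {Ω : Type*} [Fintype Ω] [PartialOrder Ω]
    {S : Type*} [Ring S] {H : Ω → Type*} [∀ i, AddCommGroup (H i)] [∀ i, Module S (H i)]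
    {Y : Type*} {r : Y → Y → Prop} (hr : ∀ a b : Y, r a b → r b a → a = b)
    {ϖ : Set Ω → Y}
    (h31 : ∀ B : Set Ω, ϖ B = ϖ (idl B))
    (h32 : ∀ I J : Set Ω, IsIdl I → IsIdl J → I ⊆ J → r (ϖ I) (ϖ J))
    (h33 : ∀ I : Set Ω, IsIdl I → ∀ u ∈ I, ϖ I = ϖ {u} → I = idl {u})
    {φ : (∀ i, H i) ≃ₗ[S] (∀ i, H i)} (hφ : Gpred S H ϖ φ) {u j j' : Ω}
    (h : RR φ u j) (h' : RR φ u j') : j = j' := by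
  have w := RW h31 hφ h
  have w' := RW h31 hφ h'
  obtain ⟨α, h0, h⟩ := h
  obtain ⟨α', h0', h'⟩ := h'
  by_contra hne
  have n1 : ¬ j ≤ j' := fun hl => hne (inc h31 h33 (w.trans w'.symm) hl)
  have n2 : ¬ j' ≤ j := fun hl => hne (inc h31 h33 (w'.trans w.symm) hl).symm
  have m1 : φ (Pi.single u α) j ≠ 0 := mem_of_idl_eq h
  have m1' : φ (Pi.single u α') j' ≠ 0 := mem_of_idl_eq h'
  have z1 : φ (Pi.single u α') j = 0 := by
    by_contra hz
    exact n1 (mem_idl_single.1 (h' ▸ mem_idl_of_mem hz))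
  have z2 : φ (Pi.single u α) j' = 0 := by
    by_contra hz
    exact n2 (mem_idl_single.1 (h ▸ mem_idl_of_mem hz))
  have s1 : φ (Pi.single u (α + α')) j ≠ 0 := by
    rw [Pi.single_add, map_add, Pi.add_apply, z1, add_zero]; exact m1
  have s2 : φ (Pi.single u (α + α')) j' ≠ 0 := by
    rw [Pi.single_add, map_add, Pi.add_apply, z2, zero_add]; exact m1'
  have hs : α + α' ≠ 0 := by
    intro hz
    rw [hz] at s1
    simp at s1
  obtain ⟨k, hk, -⟩ := key hr h31 h32 h33 hφ hs
  have wk := RW h31 hφ ⟨_, hs, hk⟩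
  have e1 := inc h31 h33 (w.trans wk.symm) (mem_idl_single.1 (hk ▸ mem_idl_of_mem s1))
  have e2 := inc h31 h33 (w'.trans wk.symm) (mem_idl_single.1 (hk ▸ mem_idl_of_mem s2))
  exact hne (e1.trans e2.symm)

open Classical in
/-- Specification of the induced map. -/
structure Spec {Ω : Type*} [PartialOrder Ω] {S : Type*} [Ring S] {H : Ω → Type*}
    [∀ i, AddCommGroup (H i)] [∀ i, Module S (H i)]
    (φ : (∀ i, H i) ≃ₗ[S] (∀ i, H i)) (f : Ω → Ω) : Prop where
  off : ∀ i ∉ Kset H, f i = i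
  lead : ∀ (u : Ω) (α : H u), α ≠ 0 → idl (hsupp (φ (Pi.single u α))) = idl {f u}
  back : ∀ u ∈ Kset H, RR φ.symm (f u) u

theorem Spec.memK {Ω : Type*} [PartialOrder Ω] {S : Type*} [Ring S] {H : Ω → Type*}
    [∀ i, AddCommGroup (H i)] [∀ i, Module S (H i)]
    {φ : (∀ i, H i) ≃ₗ[S] (∀ i, H i)} {f : Ω → Ω} (h : Spec φ f) {u : Ω} (hu : u ∈ Kset H) :
    f u ∈ Kset H := by
  obtain ⟨α, h0, -⟩ := h.back u hu
  exact ⟨α, h0⟩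

theorem Spec.rr {Ω : Type*} [PartialOrder Ω] {S : Type*} [Ring S] {H : Ω → Type*}
    [∀ i, AddCommGroup (H i)] [∀ i, Module S (H i)]
    {φ : (∀ i, H i) ≃ₗ[S] (∀ i, H i)} {f : Ω → Ω} (h : Spec φ f) {u : Ω} (hu : u ∈ Kset H) :
    RR φ u (f u) := by
  obtain ⟨α, h0⟩ := hu
  exact ⟨α, h0, h.lead u α h0⟩

open Classical in
theorem exists_spec {Ω : Type*} [Fintype Ω] [PartialOrder Ω]
    {S : Type*} [Ring S] {H : Ω → Type*} [∀ i, AddCommGroup (H i)] [∀ i, Module S (H i)]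
    {Y : Type*} {r : Y → Y → Prop} (hr : ∀ a b : Y, r a b → r b a → a = b)
    {ϖ : Set Ω → Y}
    (h31 : ∀ B : Set Ω, ϖ B = ϖ (idl B))
    (h32 : ∀ I J : Set Ω, IsIdl I → IsIdl J → I ⊆ J → r (ϖ I) (ϖ J))
    (h33 : ∀ I : Set Ω, IsIdl I → ∀ u ∈ I, ϖ I = ϖ {u} → I = idl {u})
    {φ : (∀ i, H i) ≃ₗ[S] (∀ i, H i)} (hφ : Gpred S H ϖ φ) : ∃ f, Spec φ f := by
  have : ∀ u, ∃ j, (u ∉ Kset H → j = u) ∧ (u ∈ Kset H → RR φ u j ∧ RR φ.symm j u) := by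
    intro u
    by_cases hu : u ∈ Kset H
    · obtain ⟨α, h0⟩ := id hu
      obtain ⟨j, h1, h2⟩ := key hr h31 h32 h33 hφ h0
      exact ⟨j, fun h => absurd hu h, fun _ => ⟨⟨α, h0, h1⟩, h2⟩⟩
    · exact ⟨u, fun _ => rfl, fun h => absurd h hu⟩
  choose f hf hf' using this
  refine ⟨f, hf, ?_, fun u hu => (hf' u hu).2⟩
  intro u α h0
  obtain ⟨j, h1, -⟩ := key hr h31 h32 h33 hφ h0
  rw [h1, RR_uniq hr h31 h32 h33 hφ ⟨α, h0, h1⟩ (hf' u ⟨α, h0⟩).1]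

theorem spec_inv {Ω : Type*} [Fintype Ω] [PartialOrder Ω]
    {S : Type*} [Ring S] {H : Ω → Type*} [∀ i, AddCommGroup (H i)] [∀ i, Module S (H i)]
    {Y : Type*} {r : Y → Y → Prop} (hr : ∀ a b : Y, r a b → r b a → a = b)
    {ϖ : Set Ω → Y}
    (h31 : ∀ B : Set Ω, ϖ B = ϖ (idl B))
    (h32 : ∀ I J : Set Ω, IsIdl I → IsIdl J → I ⊆ J → r (ϖ I) (ϖ J))
    (h33 : ∀ I : Set Ω, IsIdl I → ∀ u ∈ I, ϖ I = ϖ {u} → I = idl {u})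
    {φ : (∀ i, H i) ≃ₗ[S] (∀ i, H i)} (hφ : Gpred S H ϖ φ) {f g : Ω → Ω}
    (hf : Spec φ f) (hg : Spec φ.symm g) (u : Ω) : g (f u) = u := by
  by_cases hu : u ∈ Kset H
  · exact RR_uniq hr h31 h32 h33 (Gsymm hφ) (hg.rr (hf.memK hu)) (hf.back u hu)
  · rw [hf.off u hu, hg.off u hu]

open Classical in
theorem spec_mono {Ω : Type*} [Fintype Ω] [PartialOrder Ω]
    {S : Type*} [Ring S] {H : Ω → Type*} [∀ i, AddCommGroup (H i)] [∀ i, Module S (H i)]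
    {Y : Type*} {ϖ : Set Ω → Y}
    (h31 : ∀ B : Set Ω, ϖ B = ϖ (idl B))
    (h33 : ∀ I : Set Ω, IsIdl I → ∀ u ∈ I, ϖ I = ϖ {u} → I = idl {u})
    (hassum : (∀ i : Ω, ∃ x : H i, x ≠ 0) ∨ Hierarchical Ω)
    {φ : (∀ i, H i) ≃ₗ[S] (∀ i, H i)} (hφ : Gpred S H ϖ φ) {f : Ω → Ω}
    (hf : Spec φ f) {u v : Ω} (huv : u ≤ v) : f u ≤ f v := by
  rcases eq_or_lt_of_le huv with rfl | hlt
  · exact le_rfl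
  by_cases hK : u ∈ Kset H ∧ v ∈ Kset H
  · obtain ⟨⟨α, hα⟩, ⟨β, hβ⟩⟩ := hK
    by_contra hn
    have hwv := RW h31 hφ (hf.rr ⟨β, hβ⟩)
    have la := hf.lead u α hα
    have lb := hf.lead v β hβ
    have hs : idl (hsupp (Pi.single u α + Pi.single v β : ∀ i, H i)) = idl {v} := by
      ext x
      constructor
      · rintro ⟨b, hb, hxb⟩
        refine mem_idl_single.2 (hxb.trans ?_)
        by_contra hbv
        apply hb
        rw [Pi.add_apply, Pi.single_eq_of_ne, Pi.single_eq_of_ne, add_zero]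
        · rintro rfl; exact hbv le_rfl
        · rintro rfl; exact hbv huv
      · intro hx
        refine ⟨v, ?_, mem_idl_single.1 hx⟩
        change (Pi.single u α + Pi.single v β : ∀ i, H i) v ≠ 0
        rw [Pi.add_apply, Pi.single_eq_of_ne hlt.ne', zero_add, Pi.single_eq_same]
        exact hβ
    have hJ : ϖ (idl (hsupp (φ (Pi.single u α + Pi.single v β)))) = ϖ {f v} := by
      rw [← h31, hφ, h31, hs, ← h31, hwv]
    have z : φ (Pi.single v β) (f u) = 0 := by
      by_contra hz
      exact hn (mem_idl_single.1 (lb ▸ mem_idl_of_mem hz))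
    have mu : f u ∈ hsupp (φ (Pi.single u α + Pi.single v β)) := by
      change φ (Pi.single u α + Pi.single v β) (f u) ≠ 0
      rw [map_add, Pi.add_apply, z, add_zero]
      exact mem_of_idl_eq la
    have mv : f v ∈ idl (hsupp (φ (Pi.single u α + Pi.single v β))) := by
      by_cases hc : f v ≤ f u
      · exact ⟨_, mu, hc⟩
      · apply mem_idl_of_mem
        have z : φ (Pi.single u α) (f v) = 0 := by
          by_contra hz
          exact hc (mem_idl_single.1 (la ▸ mem_idl_of_mem hz))
        change φ (Pi.single u α + Pi.single v β) (f v) ≠ 0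
        rw [map_add, Pi.add_apply, z, zero_add]
        exact mem_of_idl_eq lb
    have := h33 _ (isIdl_idl _) _ mv hJ
    exact hn (mem_idl_single.1 (this ▸ mem_idl_of_mem mu))
  · rcases hassum with hall | hier
    · exact absurd ⟨hall u, hall v⟩ hK
    · have hlen : ∀ x, lenP (f x) = lenP x := by
        intro x
        by_cases hx : x ∈ Kset H
        · have w := RW h31 hφ (hf.rr hx)
          rcases lt_trichotomy (lenP (f x)) (lenP x) with h | h | h
          · rw [inc h31 h33 w (hier _ _ h)]
          · exact h
          · rw [← inc h31 h33 w.symm (hier _ _ h)]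
        · rw [hf.off x hx]
      apply hier
      rw [hlen, hlen]
      exact lenP_lt hlt

theorem stmt2 {Ω : Type*} [Fintype Ω] [Nonempty Ω] [PartialOrder Ω]
    {S : Type*} [Ring S] {H : Ω → Type*} [∀ i, AddCommGroup (H i)] [∀ i, Module S (H i)]
    {Y : Type*} (r : Y → Y → Prop) (hr : ∀ a b : Y, r a b → r b a → a = b)
    (ϖ : Set Ω → Y)
    (h31 : ∀ B : Set Ω, ϖ B = ϖ (idl B))
    (h32 : ∀ I J : Set Ω, IsIdl I → IsIdl J → I ⊆ J → r (ϖ I) (ϖ J))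
    (h33 : ∀ I : Set Ω, IsIdl I → ∀ u ∈ I, ϖ I = ϖ {u} → I = idl {u})
    (hassum : (∀ i : Ω, ∃ x : H i, x ≠ 0) ∨ Hierarchical Ω)
    (φ : (∀ i, H i) ≃ₗ[S] (∀ i, H i)) (hφ : Gpred S H ϖ φ) :
    ∃ lam : Ω ≃o Ω,
      ((∀ i ∉ Kset H, lam i = i) ∧
        ∀ α : ∀ i, H i, idl (hsupp (φ α)) = lam '' idl (hsupp α)) ∧
      Tpred S H ϖ lam ∧
      ∀ lam' : Ω ≃o Ω,
        ((∀ i ∉ Kset H, lam' i = i) ∧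
          ∀ α : ∀ i, H i, idl (hsupp (φ α)) = lam' '' idl (hsupp α)) → lam' = lam := by
  classical
  obtain ⟨f, hf⟩ := exists_spec hr h31 h32 h33 hφ
  obtain ⟨g, hg⟩ := exists_spec hr h31 h32 h33 (Gsymm hφ)
  have gf : ∀ u, g (f u) = u := spec_inv hr h31 h32 h33 hφ hf hg
  have fg : ∀ u, f (g u) = u :=
    spec_inv hr h31 h32 h33 (Gsymm hφ) hg (by rw [LinearEquiv.symm_symm]; exact hf)
  have fm : ∀ {u v}, u ≤ v → f u ≤ f v := fun h => spec_mono h31 h33 hassum hφ hf h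
  have gm : ∀ {u v}, u ≤ v → g u ≤ g v := fun h => spec_mono h31 h33 hassum (Gsymm hφ) hg h
  have fle : ∀ {u v}, f u ≤ f v ↔ u ≤ v :=
    fun {u v} => ⟨fun h => by simpa [gf] using gm h, fm⟩
  let lam : Ω ≃o Ω := { toFun := f, invFun := g, left_inv := gf, right_inv := fg,
                        map_rel_iff' := fle }
  have hlam : ∀ i, lam i = f i := fun _ => rfl
  have hmain : ∀ α : ∀ i, H i, idl (hsupp (φ α)) = lam '' idl (hsupp α) := by
    intro α
    ext x
    constructor
    · rintro ⟨b, hb, hxb⟩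
      obtain ⟨v, hv0, hv⟩ := exists_of_sum φ α hb
      have h1 : b ≤ f v := mem_idl_single.1 (hf.lead v _ hv0 ▸ mem_idl_of_mem hv)
      refine ⟨g x, ⟨v, hv0, ?_⟩, fg x⟩
      simpa [gf] using gm (hxb.trans h1)
    · rintro ⟨y, ⟨b, hb, hyb⟩, rfl⟩
      obtain ⟨m, hbm, hm⟩ := (Set.toFinite (hsupp α)).exists_le_maximal hb
      refine ⟨f m, ?_, fm (hyb.trans hbm)⟩
      have hm0 : α m ≠ 0 := hm.prop
      change φ α (f m) ≠ 0
      have h1 : φ α = ∑ j, φ (Pi.single j (α j)) := by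
        rw [← map_sum, Finset.univ_sum_single]
      rw [h1, Finset.sum_apply, Finset.sum_eq_single m]
      · exact mem_of_idl_eq (hf.lead m _ hm0)
      · intro j _ hj
        by_contra hz
        by_cases hj0 : α j = 0
        · rw [hj0] at hz; simp at hz
        · have : f m ≤ f j := mem_idl_single.1 (hf.lead j _ hj0 ▸ mem_idl_of_mem hz)
          have hmj := fle.1 this
          exact hj (le_antisymm (hm.le_of_ge hj0 hmj) hmj)
      · simp
  refine ⟨lam, ⟨hf.off, hmain⟩, ⟨hf.off, ?_, ?_⟩, ?_⟩
  · intro I hI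
    let α : ∀ i, H i := fun i => if h : i ∈ I then (hI h).choose else 0
    have hα : hsupp α = I := by
      ext i
      by_cases h : i ∈ I
      · have := (hI h).choose_spec
        simpa [hsupp, α, h] using this
      · simp [hsupp, α, h]
    have him : idl (lam '' I) = lam '' idl I := by
      ext x
      constructor
      · rintro ⟨_, ⟨b, hb, rfl⟩, hxb⟩
        refine ⟨g x, ⟨b, hb, ?_⟩, fg x⟩
        simpa [gf, hlam] using gm hxb
      · rintro ⟨y, ⟨b, hb, hyb⟩, rfl⟩
        exact ⟨_, ⟨b, hb, rfl⟩, fm hyb⟩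
    have h1 := hφ α
    rw [h31, hmain, hα, ← him, ← h31] at h1
    exact h1
  · intro i
    let L : H i →ₗ[S] H (lam i) :=
      (LinearMap.proj (lam i)).comp (φ.toLinearMap.comp (LinearMap.single S H i))
    have hL : ∀ x, L x = φ (Pi.single i x) (f i) := fun _ => rfl
    refine ⟨LinearEquiv.ofBijective L ⟨?_, ?_⟩⟩
    · rw [injective_iff_map_eq_zero]
      intro a ha
      by_contra h0
      have : f i ∈ hsupp (φ (Pi.single i a)) := mem_of_idl_eq (hf.lead i a h0)
      exact this ha
    · intro β
      by_cases hβ : β = 0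
      · exact ⟨0, by rw [hβ, map_zero]⟩
      have hlead := hg.lead (f i) β hβ
      rw [gf] at hlead
      set γ := φ.symm (Pi.single (f i) β) with hγ
      refine ⟨γ i, ?_⟩
      have h1 : φ γ = ∑ j, φ (Pi.single j (γ j)) := by
        rw [← map_sum, Finset.univ_sum_single]
      have h2 : φ γ (f i) = β := by
        rw [hγ, LinearEquiv.apply_symm_apply]
        exact Pi.single_eq_same _ _
      rw [hL]
      refine Eq.trans ?_ h2
      rw [h1, Finset.sum_apply]
      symm
      apply Finset.sum_eq_single i
      · intro j _ hj
        by_contra hz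
        by_cases hj0 : γ j = 0
        · rw [hj0] at hz; simp at hz
        · have a1 : f i ≤ f j := mem_idl_single.1 (hf.lead j _ hj0 ▸ mem_idl_of_mem hz)
          have hj1 : j ∈ hsupp γ := hj0
          have a2 : j ≤ i := mem_idl_single.1 (hlead ▸ mem_idl_of_mem hj1)
          exact hj (le_antisymm a2 (fle.1 a1))
      · simp
  · rintro lam' ⟨ho, hm⟩
    ext i
    by_cases hi : i ∈ Kset H
    · obtain ⟨α, h0⟩ := hi
      have e := (hm (Pi.single i α)).symm.trans (hmain (Pi.single i α))
      rw [hsupp_single h0] at e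
      have hii : i ∈ idl {i} := mem_idl_single.2 le_rfl
      have a1 : lam' i ∈ lam '' idl {i} := e ▸ Set.mem_image_of_mem _ hii
      have a2 : lam i ∈ lam' '' idl {i} := e ▸ Set.mem_image_of_mem _ hii
      obtain ⟨x, hx, hx'⟩ := a1
      obtain ⟨y, hy, hy'⟩ := a2
      apply le_antisymm
      · rw [← hx']; exact lam.monotone (mem_idl_single.1 hx)
      · rw [← hy']; exact lam'.monotone (mem_idl_single.1 hy)
    · rw [ho i hi]; exact (hf.off i hi).symm
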